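/- Let 1 < α < 2, let n ≥ 2 be an integer, and let λ be a real number with |λ| < 1. If |λ| < Γ(α)/( (n − 1) · rf(n−1, α−1) ), then E_{−λ, α, 0}(n, 0) + λ·E_{−λ, α, α−1}(n, 0) ≠ 0. -/

import Mathlib

/-- Rising factorial `rf x r = Γ(x+r)/Γ(x)`, with the convention `rf 0 r = 0`. -/
noncomputable def rf (x r : ℝ) : ℝ := if x = 0 then 0 else Real.Gamma (x + r) / Real.Gamma x

/-- The nabla discrete Mittag-Leffler function `E_{p,α,β}(n,0)`. -/
noncomputable def ML (p α β : ℝ) (n : ℤ) : ℝ :=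
  ∑' k : ℕ, p ^ k * rf (n : ℝ) (α * k + β) / Real.Gamma (α * k + β + 1)

/-!
Write `Eₙ = E_{-λ,α,0}(n, 0)` and `c_j = α(α+1)⋯(α+j-1)/j!`. The coefficients of the series are
`rf(n, r)/Γ(r+1) = (r+1)⋯(r+n-1)/(n-1)!`, polynomials in `r`, and Pascal's rule for them collapses
`E_{-λ,α,0}(n, 0) + λ E_{-λ,α,α-1}(n, 0)` to `Eₙ₋₁`. For `λ ≤ 0` every term of that series is
nonnegative. For `λ ≥ 0`, Vandermonde's identity gives the renewal equation
`Eₙ₊₁ = 1 - λ ∑_{j ≤ n} c_j Eₙ₊₁₋ⱼ`, whose solution stays in `(0, 1]` as long as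
`λ (c_1 + ⋯ + c_n) < 1`. By the hockey-stick identity that sum is `rf(n+1, α)/Γ(α+1) - 1`,
and for `α ≥ 1` and `x ≥ 1` we have `rf(x, α)/Γ(α+1) ≤ x rf(x, α-1)/Γ(α)`.
-/

open Finset Polynomial

section Multichoose

theorem multichoose_eq_ascPochhammer_div_factorial {K : Type*} [Field K] [CharZero K]
    (r : K) (n : ℕ) :
    Ring.multichoose r n = (ascPochhammer K n).eval r / n.factorial := by
  rw [eq_div_iff (Nat.cast_ne_zero.mpr n.factorial_ne_zero), mul_comm, ← nsmul_eq_mul,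
    Ring.factorial_nsmul_multichoose_eq_ascPochhammer, ascPochhammer_smeval_eq_eval]

theorem multichoose_pos {K : Type*} [Field K] [LinearOrder K] [IsStrictOrderedRing K]
    {r : K} (hr : 0 < r) (n : ℕ) : 0 < Ring.multichoose r n := by
  rw [multichoose_eq_ascPochhammer_div_factorial]
  exact div_pos (ascPochhammer_pos n r hr) (by positivity)

theorem multichoose_eq_negOnePow_smul_choose_neg {R : Type*} [Ring R] [BinomialRing R]
    (r : R) (n : ℕ) : Ring.multichoose r n = Int.negOnePow n • Ring.choose (-r) n := by
  rw [Ring.choose_neg', smul_smul, Int.units_mul_self, one_smul]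

theorem multichoose_add_eq_sum_antidiagonal {R : Type*} [Ring R] [BinomialRing R] {r s : R}
    (h : Commute r s) (n : ℕ) :
    Ring.multichoose (r + s) n =
      ∑ ij ∈ antidiagonal n, Ring.multichoose r ij.1 * Ring.multichoose s ij.2 := by
  rw [multichoose_eq_negOnePow_smul_choose_neg, neg_add, Ring.add_choose_eq n h.neg_left.neg_right,
    smul_sum]
  refine sum_congr rfl fun ij hij => ?_
  rw [multichoose_eq_negOnePow_smul_choose_neg r, multichoose_eq_negOnePow_smul_choose_neg s,
    smul_mul_smul_comm, ← Int.negOnePow_add, ← Nat.cast_add, mem_antidiagonal.mp hij]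

theorem sum_range_succ_multichoose {R : Type*} [Ring R] [BinomialRing R] (r : R) (n : ℕ) :
    ∑ j ∈ range (n + 1), Ring.multichoose r j = Ring.multichoose (r + 1) n := by
  induction n with
  | zero => simp
  | succ n ih => rw [sum_range_succ, ih, Ring.multichoose_succ_succ, add_comm]

end Multichoose

theorem summable_pow_mul_eval {p : ℝ} (hp : |p| < 1) (P : ℝ[X]) :
    Summable fun k : ℕ => p ^ k * P.eval (k : ℝ) := by
  induction P using Polynomial.induction_on' with
  | add P Q hP hQ => simpa only [eval_add, mul_add] using hP.add hQ
  | monomial m a =>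
    refine ((summable_pow_mul_geometric_of_norm_lt_one m hp).mul_left a).congr fun k => ?_
    rw [eval_monomial]
    ring

theorem summable_pow_mul_multichoose {p : ℝ} (hp : |p| < 1) (a b : ℝ) (n : ℕ) :
    Summable fun k : ℕ => p ^ k * Ring.multichoose (a * k + b) n := by
  refine ((summable_pow_mul_eval hp
    ((ascPochhammer ℝ n).comp (C a * X + C b))).div_const (n.factorial : ℝ)).congr fun k => ?_
  rw [multichoose_eq_ascPochhammer_div_factorial, mul_div_assoc]
  simp

section RisingFactorial

theorem Gamma_add_natCast {z : ℝ} (hz : 0 < z) (n : ℕ) :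
    Real.Gamma (z + n) = (ascPochhammer ℝ n).eval z * Real.Gamma z := by
  induction n with
  | zero => simp
  | succ n ih =>
    rw [Nat.cast_add_one, ← add_assoc, Real.Gamma_add_one (by positivity), ih,
      ascPochhammer_succ_eval]
    ring

theorem rf_natCast_add_one_div_Gamma {r : ℝ} (hr : -1 < r) (n : ℕ) :
    rf (n + 1) r / Real.Gamma (r + 1) = Ring.multichoose (r + 1) n := by
  have hΓ : Real.Gamma (r + 1) ≠ 0 := (Real.Gamma_pos_of_pos (by linarith)).ne'
  rw [rf, if_neg (by positivity), Real.Gamma_nat_eq_factorial,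
    show (n : ℝ) + 1 + r = r + 1 + n by ring, Gamma_add_natCast (by linarith),
    multichoose_eq_ascPochhammer_div_factorial]
  field_simp

theorem rf_pos {x r : ℝ} (hx : 0 < x) (hxr : 0 < x + r) : 0 < rf x r := by
  rw [rf, if_neg hx.ne']
  exact div_pos (Real.Gamma_pos_of_pos hxr) (Real.Gamma_pos_of_pos hx)

theorem rf_add_one {x r : ℝ} (hxr : x + r ≠ 0) : rf x (r + 1) = (x + r) * rf x r := by
  rcases eq_or_ne x 0 with rfl | hx
  · simp [rf]
  · rw [rf, rf, if_neg hx, if_neg hx, ← add_assoc, Real.Gamma_add_one hxr, mul_div_assoc]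

theorem rf_div_Gamma_add_one_le {x α : ℝ} (hx : 1 ≤ x) (hα : 1 ≤ α) :
    rf x α / Real.Gamma (α + 1) ≤ x * rf x (α - 1) / Real.Gamma α := by
  have hΓ : 0 < Real.Gamma α := Real.Gamma_pos_of_pos (by linarith)
  have hrf : 0 < rf x (α - 1) := rf_pos (by linarith) (by linarith)
  have h_step : rf x α = (x + (α - 1)) * rf x (α - 1) := by
    rw [← rf_add_one (by linarith), sub_add_cancel]
  have h_factor : x + (α - 1) ≤ x * α := by nlinarith
  rw [h_step, Real.Gamma_add_one (by linarith), div_le_div_iff₀ (by positivity) hΓ]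
  calc (x + (α - 1)) * rf x (α - 1) * Real.Gamma α
      ≤ x * α * rf x (α - 1) * Real.Gamma α := by gcongr
    _ = x * rf x (α - 1) * (α * Real.Gamma α) := by ring

theorem mul_rf_div_Gamma_sub_one_lt_one {x α lam : ℝ} (hx : 1 ≤ x) (hα : 1 ≤ α)
    (hlam : |lam| < 1) (h : |lam| < Real.Gamma α / (x * rf x (α - 1))) :
    lam * (rf x α / Real.Gamma (α + 1) - 1) < 1 := by
  have hΓ : 0 < Real.Gamma α := Real.Gamma_pos_of_pos (by linarith)
  have hΓ' : 0 < Real.Gamma (α + 1) := Real.Gamma_pos_of_pos (by linarith)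
  have hrf : 0 < rf x (α - 1) := rf_pos (by linarith) (by linarith)
  have hrf' : 0 < rf x α := rf_pos (by linarith) (by linarith)
  rcases le_total lam 0 with hneg | hpos
  · have : lam * (rf x α / Real.Gamma (α + 1)) ≤ 0 :=
      mul_nonpos_of_nonpos_of_nonneg hneg (by positivity)
    linarith [neg_abs_le lam]
  · rw [abs_of_nonneg hpos, lt_div_iff₀ (by positivity)] at h
    calc lam * (rf x α / Real.Gamma (α + 1) - 1)
        ≤ lam * (x * rf x (α - 1) / Real.Gamma α) := by
          gcongr
          linarith [rf_div_Gamma_add_one_le hx hα]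
      _ < 1 := by rwa [← mul_div_assoc, div_lt_one hΓ]

end RisingFactorial

theorem mem_Ioc_of_renewal {c u : ℕ → ℝ} {lam : ℝ} (hlam : 0 ≤ lam) (hc : ∀ n, 0 ≤ c n)
    (hu : ∀ n, u n = 1 - lam * ∑ ij ∈ antidiagonal n, c ij.1 * u ij.2) (n : ℕ)
    (h : lam * ∑ j ∈ range n, c (j + 1) < 1) : u n ∈ Set.Ioc 0 1 := by
  induction n using Nat.strong_induction_on with
  | _ n ih =>
    have hmem : ∀ j ∈ range n, u (n - (j + 1)) ∈ Set.Ioc 0 1 := fun j hj => by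
      have hlt : n - (j + 1) < n := by have := mem_range.mp hj; omega
      refine ih _ hlt (lt_of_le_of_lt (mul_le_mul_of_nonneg_left ?_ hlam) h)
      exact sum_le_sum_of_subset_of_nonneg (range_mono hlt.le) fun k _ _ => hc (k + 1)
    set S := ∑ j ∈ range n, c (j + 1) * u (n - (j + 1))
    have hS_nonneg : 0 ≤ S := sum_nonneg fun j hj => mul_nonneg (hc _) (hmem j hj).1.le
    have hS_le : S ≤ ∑ j ∈ range n, c (j + 1) :=
      sum_le_sum fun j hj => mul_le_of_le_one_right (hc _) (hmem j hj).2
    have h_isolate : (1 + lam * c 0) * u n = 1 - lam * S := by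
      have hn := hu n
      rw [Nat.sum_antidiagonal_eq_sum_range_succ (fun i j => c i * u j), sum_range_succ',
        Nat.sub_zero] at hn
      linear_combination hn
    have h_coeff : 0 ≤ lam * c 0 := mul_nonneg hlam (hc 0)
    have hS_lt : lam * S < 1 := (mul_le_mul_of_nonneg_left hS_le hlam).trans_lt h
    have h_pos : 0 < u n :=
      pos_of_mul_pos_right (by rw [h_isolate]; linarith) (by linarith : 0 ≤ 1 + lam * c 0)
    exact ⟨h_pos, by nlinarith [mul_nonneg hlam hS_nonneg, mul_nonneg h_coeff h_pos.le]⟩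

section MittagLeffler

variable {p α β : ℝ}

theorem ML_natCast_add_one (hα : 0 ≤ α) (hβ : -1 < β) (n : ℕ) :
    ML p α β (n + 1) = ∑' k : ℕ, p ^ k * Ring.multichoose (α * k + (β + 1)) n := by
  refine tsum_congr fun k => ?_
  have hk : 0 ≤ α * k := by positivity
  push_cast
  rw [mul_div_assoc, rf_natCast_add_one_div_Gamma (by linarith), add_assoc]

theorem ML_nonneg (hp : 0 ≤ p) (hα : 0 ≤ α) (hβ : -1 < β) (n : ℕ) : 0 ≤ ML p α β (n + 1) := by
  rw [ML_natCast_add_one hα hβ]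
  refine tsum_nonneg fun k => mul_nonneg (pow_nonneg hp k) (multichoose_pos ?_ n).le
  have hk : 0 ≤ α * k := by positivity
  linarith

theorem ML_eq_multichoose_add_mul_ML (hp : |p| < 1) (hα : 0 ≤ α) (hβ : -1 < β) (n : ℕ) :
    ML p α β (n + 1) = Ring.multichoose (β + 1) n + p * ML p α (β + α) (n + 1) := by
  rw [ML_natCast_add_one hα hβ, ML_natCast_add_one hα (by linarith),
    (summable_pow_mul_multichoose hp α (β + 1) n).tsum_eq_zero_add, ← tsum_mul_left]
  congr 1
  · simp
  · refine tsum_congr fun k => ?_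
    rw [pow_succ', mul_assoc, Nat.cast_add_one,
      show α * ((k : ℝ) + 1) + (β + 1) = α * k + (β + α + 1) by ring]

theorem ML_add_two (hp : |p| < 1) (hα : 0 ≤ α) (hβ : 0 < β) (n : ℕ) :
    ML p α β (n + 2) = ML p α (β - 1) (n + 2) + ML p α β (n + 1) := by
  have h_cast : (n : ℤ) + 2 = (n + 1 : ℕ) + 1 := by push_cast; ring
  rw [h_cast, ML_natCast_add_one hα (by linarith), ML_natCast_add_one hα (by linarith),
    ML_natCast_add_one hα (by linarith), ← (summable_pow_mul_multichoose hp α _ _).tsum_add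
      (summable_pow_mul_multichoose hp α _ _)]
  refine tsum_congr fun k => ?_
  rw [sub_add_cancel, ← add_assoc, Ring.multichoose_succ_succ, mul_add]

theorem ML_add_eq_sum_antidiagonal (hp : |p| < 1) (hα : 0 ≤ α) (hβ : -1 < β) {γ : ℝ}
    (hβγ : -1 < β + γ) (n : ℕ) :
    ML p α (β + γ) (n + 1) =
      ∑ ij ∈ antidiagonal n, Ring.multichoose γ ij.1 * ML p α β (ij.2 + 1) := by
  simp only [ML_natCast_add_one hα hβ, ML_natCast_add_one hα hβγ, ← tsum_mul_left]
  have h_summable : ∀ ij ∈ antidiagonal n, Summable fun k : ℕ =>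
      Ring.multichoose γ ij.1 * (p ^ k * Ring.multichoose (α * k + (β + 1)) ij.2) :=
    fun ij _ => (summable_pow_mul_multichoose hp α (β + 1) ij.2).mul_left _
  rw [← Summable.tsum_finsetSum h_summable]
  refine tsum_congr fun k => ?_
  rw [show α * (k : ℝ) + (β + γ + 1) = γ + (α * k + (β + 1)) by ring,
    multichoose_add_eq_sum_antidiagonal (Commute.all _ _), mul_sum]
  exact sum_congr rfl fun ij _ => mul_left_comm _ _ _

theorem ML_zero_sub_mul_ML_sub_one (hp : |p| < 1) (hα : 0 < α) (n : ℕ) :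
    ML p α 0 (n + 2) - p * ML p α (α - 1) (n + 2) = ML p α 0 (n + 1) := by
  have h_succ := ML_eq_multichoose_add_mul_ML hp hα.le neg_one_lt_zero (n + 1)
  have h_self := ML_eq_multichoose_add_mul_ML hp hα.le neg_one_lt_zero n
  have h_pascal := ML_add_two hp hα.le hα n
  rw [zero_add, zero_add, Ring.multichoose_one] at h_succ h_self
  push_cast at h_succ
  rw [add_assoc, one_add_one_eq_two] at h_succ
  linear_combination h_succ - h_self + p * h_pascal

theorem ML_zero_renewal (hp : |p| < 1) (hα : 0 ≤ α) (n : ℕ) :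
    ML p α 0 (n + 1) =
      1 + p * ∑ ij ∈ antidiagonal n, Ring.multichoose α ij.1 * ML p α 0 (ij.2 + 1) := by
  rw [ML_eq_multichoose_add_mul_ML hp hα neg_one_lt_zero, zero_add, Ring.multichoose_one,
    ← ML_add_eq_sum_antidiagonal hp hα neg_one_lt_zero (by linarith), zero_add]

theorem ML_zero_pos {lam : ℝ} (hlam : |lam| < 1) (hα : 0 < α) (n : ℕ)
    (h : lam * (Ring.multichoose (α + 1) n - 1) < 1) : 0 < ML (-lam) α 0 (n + 1) := by
  have hp : |-lam| < 1 := by rwa [abs_neg]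
  rcases le_total lam 0 with hneg | hpos
  · have h_tail : 0 ≤ -lam * ML (-lam) α (0 + α) (n + 1) :=
      mul_nonneg (by linarith) (ML_nonneg (by linarith) hα.le (by linarith) n)
    rw [ML_eq_multichoose_add_mul_ML hp hα.le neg_one_lt_zero, zero_add, Ring.multichoose_one]
    linarith
  · refine (mem_Ioc_of_renewal hpos (fun j => (multichoose_pos hα j).le)
      (u := fun j => ML (-lam) α 0 (j + 1)) (fun j => ?_) n ?_).1
    · rw [ML_zero_renewal hp hα.le, neg_mul, sub_eq_add_neg]
    · rwa [← sum_range_succ_multichoose, sum_range_succ', Ring.multichoose_zero_right,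
        add_sub_cancel_right] at h

end MittagLeffler

theorem mittag_leffler_no_real_zeros_right_general {α : ℝ} (hα : 0 < α) {n : ℤ} (hn : 2 ≤ n)
    {lam : ℝ} (hlam : |lam| < 1)
    (h : lam * (rf (n - 1 : ℝ) α / Real.Gamma (α + 1) - 1) < 1) :
    0 < ML (-lam) α 0 n + lam * ML (-lam) α (α - 1) n := by
  obtain ⟨m, rfl⟩ : ∃ m : ℕ, n = m + 2 := ⟨(n - 2).toNat, by omega⟩
  have h_cast : (((m : ℤ) + 2 : ℤ) : ℝ) - 1 = m + 1 := by push_cast; ring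
  rw [h_cast, rf_natCast_add_one_div_Gamma (by linarith)] at h
  have h_collapse := ML_zero_sub_mul_ML_sub_one (p := -lam) (by rwa [abs_neg]) hα m
  rw [neg_mul, sub_neg_eq_add] at h_collapse
  exact h_collapse ▸ ML_zero_pos hlam hα m h

theorem mittag_leffler_no_real_zeros_right (α : ℝ) (hα1 : 1 < α) (hα2 : α < 2)
    (n : ℤ) (hn : 2 ≤ n) (lam : ℝ) (hlam : |lam| < 1)
    (h : |lam| < Real.Gamma α / ((n - 1 : ℝ) * rf (n - 1 : ℝ) (α - 1))) :
    ML (-lam) α 0 n + lam * ML (-lam) α (α - 1) n ≠ 0 := by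
  have hx : (1 : ℝ) ≤ n - 1 := by
    have : (2 : ℝ) ≤ n := by exact_mod_cast hn
    linarith
  exact (mittag_leffler_no_real_zeros_right_general (by linarith) hn hlam
    (mul_rf_div_Gamma_sub_one_lt_one hx hα1.le hlam h)).ne'
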